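/- Let I be an ideal of R = ℂ[x₁,…,xₙ] such that the origin is an isolated point of the zero set of I (equivalently, the local ring R₀/IR₀ is a finite-dimensional ℂ-vector space). Then the multiplicity of the origin as a solution of I, namely dim_ℂ (R₀/IR₀), equals dim_ℂ D₀[I]; in particular D₀[I] is finite dimensional. -/

import Mathlib

open MvPolynomial

noncomputable section

/-- The polynomial ring `R = ℂ[x₁,…,xₙ]`. -/
abbrev Rn (n : ℕ) := MvPolynomial (Fin n) ℂ

/-- Total degree of a monomial exponent vector. -/
def mdeg {n : ℕ} (m : Fin n →₀ ℕ) : ℕ := m.sum fun _ e => e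

/-- The truncated dual space `D₀^d`: linear functionals on `R` vanishing on all
monomials of degree greater than `d` (identified with `(R_d)*`). -/
def DualTrunc (n d : ℕ) : Submodule ℂ (Module.Dual ℂ (Rn n)) where
  carrier := {p | ∀ m : Fin n →₀ ℕ, d < mdeg m → p (monomial m 1) = 0}
  add_mem' := by
    intro p q hp hq m hm
    simp [hp m hm, hq m hm]
  zero_mem' := by
    intro m hm
    simp
  smul_mem' := by
    intro c p hp m hm
    simp [hp m hm]

/-- The Macaulay dual space `D₀` at the origin: linear functionals on `R` vanishing
on all monomials of sufficiently large degree, i.e. `⋃ d, D₀^d`. -/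
def MacaulayDual (n : ℕ) : Submodule ℂ (Module.Dual ℂ (Rn n)) where
  carrier := {p | ∃ d : ℕ, ∀ m : Fin n →₀ ℕ, d < mdeg m → p (monomial m 1) = 0}
  add_mem' := by
    rintro p q ⟨d₁, hp⟩ ⟨d₂, hq⟩
    refine ⟨max d₁ d₂, fun m hm => ?_⟩
    simp [hp m (lt_of_le_of_lt (le_max_left _ _) hm),
          hq m (lt_of_le_of_lt (le_max_right _ _) hm)]
  zero_mem' := ⟨0, fun m _ => rfl⟩
  smul_mem' := by
    rintro c p ⟨d, hp⟩
    exact ⟨d, fun m hm => by simp [hp m hm]⟩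

/-- The space of linear functionals annihilating an ideal `I`. -/
def annIdeal {n : ℕ} (I : Ideal (Rn n)) : Submodule ℂ (Module.Dual ℂ (Rn n)) where
  carrier := {p | ∀ f ∈ I, p f = 0}
  add_mem' := by
    intro p q hp hq f hf
    simp [hp f hf, hq f hf]
  zero_mem' := by intro f _; rfl
  smul_mem' := by
    intro c p hp f hf
    simp [hp f hf]

/-- The Macaulay dual space `D₀[I] = {p ∈ D₀ : p(f) = 0 for all f ∈ I}`. -/
def dualOf {n : ℕ} (I : Ideal (Rn n)) : Submodule ℂ (Module.Dual ℂ (Rn n)) :=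
  MacaulayDual n ⊓ annIdeal I

/-- The truncated dual space `D₀^d[I] = D₀[I] ∩ D₀^d`. -/
def truncDualOf {n : ℕ} (I : Ideal (Rn n)) (d : ℕ) : Submodule ℂ (Module.Dual ℂ (Rn n)) :=
  DualTrunc n d ⊓ annIdeal I

/-- The contraction `IR₀ ∩ R` of the extension of `I` to the localization at the
origin: `{g ∈ R : ∃ h ∈ R with h(0) ≠ 0 and h·g ∈ I}`. -/
def contraction {n : ℕ} (I : Ideal (Rn n)) : Set (Rn n) :=
  {g | ∃ h : Rn n, eval (0 : Fin n → ℂ) h ≠ 0 ∧ h * g ∈ I}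

/-- The maximal ideal `m = ⟨x₁,…,xₙ⟩` at the origin, as the kernel of evaluation at `0`. -/
def mIdeal (n : ℕ) : Ideal (Rn n) := RingHom.ker (eval (0 : Fin n → ℂ))

instance (n : ℕ) : (mIdeal n).IsPrime := RingHom.ker_isPrime _

/-- The localization `R₀` of `R` at the maximal ideal of the origin. -/
abbrev Loc (n : ℕ) := Localization.AtPrime (mIdeal n)

/-- The extension `JR₀` of an ideal `J ⊆ R` to the localization `R₀`. -/
def extIdeal {n : ℕ} (J : Ideal (Rn n)) : Ideal (Loc n) :=
  J.map (algebraMap (Rn n) (Loc n))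

/-- Differentiation `σ_f : D₀ → D₀` by `f ∈ R`, `(σ_f p)(g) = p (f * g)`. -/
def sigma {n : ℕ} (f : Rn n) : Module.Dual ℂ (Rn n) →ₗ[ℂ] Module.Dual ℂ (Rn n) :=
  (LinearMap.mulLeft ℂ f).dualMap

/-- A graded monomial order on exponent vectors in `ℕⁿ`: a strict total order
compatible with addition and refining total degree. -/
structure IsGradedMonomialOrder {n : ℕ} (lt : (Fin n →₀ ℕ) → (Fin n →₀ ℕ) → Prop) : Prop where
  irrefl : ∀ a, ¬ lt a a
  trans : ∀ a b c, lt a b → lt b c → lt a c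
  total : ∀ a b, a ≠ b → lt a b ∨ lt b a
  add_compat : ∀ a b c, lt a b → lt (a + c) (b + c)
  deg_compat : ∀ a b, mdeg a < mdeg b → lt a b

/-- `β` is the lead monomial of `g` for the graded local order associated to `lt`:
the `lt`-minimal monomial of `g` with nonzero coefficient. -/
def IsLeadMonomial {n : ℕ} (lt : (Fin n →₀ ℕ) → (Fin n →₀ ℕ) → Prop)
    (g : Rn n) (β : Fin n →₀ ℕ) : Prop :=
  coeff β g ≠ 0 ∧ ∀ γ : Fin n →₀ ℕ, coeff γ g ≠ 0 → γ ≠ β → lt β γ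

/-- The initial ideal `in_≥(IR₀) ∩ R`: the monomial ideal of `R` generated by the
lead monomials of nonzero elements of the contraction `IR₀ ∩ R`. -/
def initialIdeal {n : ℕ} (lt : (Fin n →₀ ℕ) → (Fin n →₀ ℕ) → Prop)
    (I : Ideal (Rn n)) : Ideal (Rn n) :=
  Ideal.span {q | ∃ g ∈ contraction I, g ≠ 0 ∧
    ∃ β : Fin n →₀ ℕ, IsLeadMonomial lt g β ∧ q = monomial β 1}

/-- `∂^α` is (up to the scalar `p(x^α)`) the initial term of the dual functional `p`:
`α` is the `lt`-maximal monomial with nonzero coefficient in `p`. -/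
def IsInitialOf {n : ℕ} (lt : (Fin n →₀ ℕ) → (Fin n →₀ ℕ) → Prop)
    (p : Module.Dual ℂ (Rn n)) (α : Fin n →₀ ℕ) : Prop :=
  p (monomial α 1) ≠ 0 ∧ ∀ β : Fin n →₀ ℕ, p (monomial β 1) ≠ 0 → β ≠ α → lt β α

/-- The natural algebra map `R → R₀/IR₀`. -/
def phiMap {n : ℕ} (I : Ideal (Rn n)) : Rn n →ₐ[ℂ] (Loc n ⧸ extIdeal I) :=
  (Ideal.Quotient.mkₐ ℂ (extIdeal I)).comp (IsScalarTower.toAlgHom ℂ (Rn n) (Loc n))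

theorem phiMap_eq_zero_iff {n : ℕ} (I : Ideal (Rn n)) (g : Rn n) :
    phiMap I g = 0 ↔ ∃ h : Rn n, eval (0 : Fin n → ℂ) h ≠ 0 ∧ h * g ∈ I := by
  have : phiMap I g = Ideal.Quotient.mk (extIdeal I) (algebraMap (Rn n) (Loc n) g) := rfl
  rw [this, Ideal.Quotient.eq_zero_iff_mem, extIdeal,
    IsLocalization.algebraMap_mem_map_algebraMap_iff (mIdeal n).primeCompl]
  rfl

theorem phiMap_isUnit {n : ℕ} (I : Ideal (Rn n)) (h : Rn n)
    (hh : eval (0 : Fin n → ℂ) h ≠ 0) : IsUnit (phiMap I h) := by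
  have h1 : IsUnit (algebraMap (Rn n) (Loc n) h) :=
    IsLocalization.map_units (Loc n) (⟨h, hh⟩ : (mIdeal n).primeCompl)
  exact h1.map (Ideal.Quotient.mk (extIdeal I))

theorem phiMap_surjective {n : ℕ} (I : Ideal (Rn n))
    (hfin : FiniteDimensional ℂ (Loc n ⧸ extIdeal I)) : Function.Surjective (phiMap I) := by
  intro y
  obtain ⟨z, rfl⟩ := Ideal.Quotient.mk_surjective y
  obtain ⟨⟨g, h⟩, hz⟩ := IsLocalization.surj (mIdeal n).primeCompl z
  have hu : IsUnit (phiMap I h) := phiMap_isUnit I h h.2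
  have hz' : Ideal.Quotient.mk (extIdeal I) z * phiMap I h = phiMap I g :=
    congrArg (Ideal.Quotient.mk (extIdeal I)) hz
  let A := LinearMap.range (phiMap I).toLinearMap
  have hA : ∀ a ∈ A, (LinearMap.mulLeft ℂ (phiMap I h)) a ∈ A := by
    rintro _ ⟨b, rfl⟩
    exact ⟨h * b, by simp⟩
  let T : A →ₗ[ℂ] A := (LinearMap.mulLeft ℂ (phiMap I h)).restrict hA
  have hT : Function.Injective T := by
    intro a b hab
    apply Subtype.ext
    exact hu.mul_left_cancel (congrArg Subtype.val hab)
  obtain ⟨⟨_, b, rfl⟩, hb⟩ := LinearMap.injective_iff_surjective.mp hT ⟨phiMap I g, g, rfl⟩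
  refine ⟨b, ?_⟩
  have hb' : phiMap I h * phiMap I b = phiMap I g := congrArg Subtype.val hb
  apply hu.mul_left_cancel
  rw [hb', ← hz']
  exact mul_comm (G := Loc n ⧸ extIdeal I) _ _

theorem eval_zero_mem_iff {n : ℕ} (u : Rn n) :
    u ∈ idealOfVars (Fin n) ℂ ↔ eval (0 : Fin n → ℂ) u = 0 := by
  have h := mem_pow_idealOfVars_iff (σ := Fin n) (R := ℂ) 1 u
  rw [pow_one] at h
  rw [h, eval_zero, constantCoeff_eq]
  constructor
  · intro h
    by_contra h0
    have := h 0 (mem_support_iff.mpr h0)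
    simp at this
  · intro h m hm
    by_contra hlt
    have : m = 0 := by
      have : m.degree = 0 := by omega
      exact (Finsupp.degree_eq_zero_iff m).mp this
    exact mem_support_iff.mp hm (this ▸ h)

theorem mdeg_eq {n : ℕ} (m : Fin n →₀ ℕ) : mdeg m = m.degree := rfl

theorem exists_pow_map_eq_zero {R Q : Type*} [CommRing R] [CommRing Q] [IsArtinianRing Q]
    (f : R →+* Q) (hf : Function.Surjective f) (J : Ideal R)
    (hJ : ∀ x ∈ J, ∀ g, IsUnit (f (x * g + 1))) : ∃ N : ℕ, ∀ x ∈ J ^ N, f x = 0 := by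
  obtain ⟨N, hN⟩ := IsArtinianRing.isNilpotent_jacobson_bot (R := Q)
  refine ⟨N, fun x hx => ?_⟩
  have h1 : J.map f ≤ Ideal.jacobson ⊥ := by
    rw [Ideal.map_le_iff_le_comap]
    intro x hx
    rw [Ideal.mem_comap, Ideal.mem_jacobson_bot]
    intro y
    obtain ⟨g, rfl⟩ := hf y
    rw [← map_mul, ← map_one f, ← map_add]
    exact hJ x hx g
  have h2 := Ideal.pow_right_mono h1 N
  rw [hN, ← Ideal.map_pow] at h2
  simpa using h2 (Ideal.mem_map_of_mem f hx)

theorem exists_pow_algHom_eq_zero {R L : Type*} [CommRing R] [Algebra ℂ R] [CommRing L]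
    [Algebra ℂ L] (K : Ideal L) [FiniteDimensional ℂ (L ⧸ K)] (f : R →ₐ[ℂ] (L ⧸ K))
    (hf : Function.Surjective f) (J : Ideal R)
    (hJ : ∀ x ∈ J, ∀ g, IsUnit (f (x * g + 1))) : ∃ N : ℕ, ∀ x ∈ J ^ N, f x = 0 := by
  have : IsArtinianRing (L ⧸ K) := IsArtinianRing.of_finite ℂ _
  exact exists_pow_map_eq_zero f.toRingHom hf J hJ

theorem phiMap_pow_eq_zero {n : ℕ} (I : Ideal (Rn n))
    (hfin : FiniteDimensional ℂ (Loc n ⧸ extIdeal I)) :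
    ∃ N : ℕ, ∀ f ∈ idealOfVars (Fin n) ℂ ^ N, phiMap I f = 0 := by
  have key : ∀ x ∈ idealOfVars (Fin n) ℂ, ∀ g : Rn n, IsUnit (phiMap I (x * g + 1)) := by
    intro x hx g
    apply phiMap_isUnit
    rw [eval_zero_mem_iff] at hx
    rw [map_add, map_mul, hx, map_one, zero_mul, zero_add]
    exact one_ne_zero
  exact exists_pow_algHom_eq_zero (extIdeal I) (phiMap I)
    (phiMap_surjective I hfin) (idealOfVars (Fin n) ℂ) key

theorem dual_apply_eq_zero {n d : ℕ} (p : Module.Dual ℂ (Rn n))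
    (hp : ∀ m : Fin n →₀ ℕ, d < mdeg m → p (monomial m 1) = 0)
    (f : Rn n) (hf : f ∈ idealOfVars (Fin n) ℂ ^ (d + 1)) : p f = 0 := by
  rw [mem_pow_idealOfVars_iff] at hf
  rw [f.as_sum, map_sum]
  refine Finset.sum_eq_zero fun m hm => ?_
  have h1 : (monomial m (coeff m f) : Rn n) = coeff m f • monomial m 1 := by
    simp [smul_monomial]
  rw [h1, map_smul, hp m (by have := hf m hm; rw [mdeg_eq]; omega), smul_zero]

theorem dualOf_eq_range {n : ℕ} (I : Ideal (Rn n))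
    (hfin : FiniteDimensional ℂ (Loc n ⧸ extIdeal I)) :
    dualOf I = LinearMap.range (phiMap I).toLinearMap.dualMap := by
  rw [LinearMap.range_dualMap_eq_dualAnnihilator_ker]
  ext p
  rw [Submodule.mem_dualAnnihilator]
  constructor
  · rintro ⟨⟨d, hd⟩, hI⟩ g hg
    obtain ⟨h, h0, hgI⟩ := (phiMap_eq_zero_iff I g).mp hg
    set c := eval (0 : Fin n → ℂ) h with hc
    let u : Rn n := 1 - C c⁻¹ * h
    have hu : u ∈ idealOfVars (Fin n) ℂ := by
      rw [eval_zero_mem_iff]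
      simp only [u, map_sub, map_one, map_mul, eval_C, ← hc]
      rw [inv_mul_cancel₀ h0, sub_self]
    obtain ⟨k, hk⟩ := one_sub_dvd_one_sub_pow u (d + 1)
    have h1 : g - u ^ (d + 1) * g ∈ I := by
      have : g - u ^ (d + 1) * g = (C c⁻¹ * k) * (h * g) := by
        calc g - u ^ (d + 1) * g = (1 - u ^ (d + 1)) * g := by ring
          _ = _ := by rw [hk]; simp only [u]; ring
      rw [this]
      exact I.mul_mem_left _ hgI
    have h2 := hI _ h1
    rw [map_sub, dual_apply_eq_zero p hd (u ^ (d + 1) * g)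
      (Ideal.mul_mem_right _ _ (Ideal.pow_mem_pow hu _)), sub_zero] at h2
    exact h2
  · intro hp
    refine ⟨?_, fun f hf => hp f ((phiMap_eq_zero_iff I f).mpr ⟨1, by simp, by simpa using hf⟩)⟩
    obtain ⟨N, hN⟩ := phiMap_pow_eq_zero I hfin
    refine ⟨N, fun m hm => hp _ (hN _ ?_)⟩
    rw [mem_pow_idealOfVars_iff]
    intro x hx
    have : x = m := by simpa using support_monomial_subset hx
    subst this
    rw [mdeg_eq] at hm
    omega

/-- If the origin is an isolated solution of `I`, i.e. `R₀/IR₀` is a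
finite-dimensional ℂ-vector space, then the multiplicity `dim_ℂ (R₀/IR₀)` equals
`dim_ℂ D₀[I]`; in particular `D₀[I]` is finite dimensional. -/
theorem multiplicity_eq_dim_dual (n : ℕ) (I : Ideal (Rn n))
    (hfin : FiniteDimensional ℂ (Loc n ⧸ extIdeal I)) :
    FiniteDimensional ℂ (dualOf I) ∧
      Module.finrank ℂ (Loc n ⧸ extIdeal I) = Module.finrank ℂ (dualOf I) := by
  rw [dualOf_eq_range I hfin]
  have hinj : Function.Injective (phiMap I).toLinearMap.dualMap :=
    LinearMap.dualMap_injective_of_surjective (phiMap_surjective I hfin)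
  refine ⟨inferInstance, ?_⟩
  rw [LinearMap.finrank_range_of_inj hinj, Subspace.dual_finrank_eq]
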